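/- Let G be a finite cyclic group of order n with generator g, and let k be a field in which n is invertible (i.e. (n : k) ≠ 0). Then the k-linear map Δ on the group algebra k[G] determined by Δ(x) = x · e with e = (1/n) Σ_{j=1}^{n} g^j ⊗ g^{n−j} ∈ k[G] ⊗[k] k[G] is a normalized nearly Frobenius coproduct on k[G]. -/

import Mathlib

/-! For any `e ∈ A ⊗ A`, the map `a ↦ (a ⊗ 1) * e` is a nearly Frobenius coproduct exactly when `e`
is a Casimir element, `(a ⊗ 1) * e = e * (1 ⊗ a)` for all `a`, and it is normalized exactly when `e`
multiplies out to `1`. On a group algebra the Casimir identity only has to be tested on a generating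
set of the group. For `e = n⁻¹ ∑ g ^ j ⊗ g ^ (n - j)` put `x = g ⊗ 1` and `y = 1 ⊗ g`: these commute
and `x ^ n = y ^ n`, so the Casimir identity for `g` is the factorization
`(∑ x ^ i * y ^ (n - 1 - i)) * (x - y) = x ^ n - y ^ n`. -/

open TensorProduct

/-- A nearly Frobenius coproduct on a `k`-algebra `A`. -/
def IsNearlyFrobenius (k A : Type*) [Field k] [Ring A] [Algebra k A]
    (Δ : A →ₗ[k] A ⊗[k] A) : Prop :=
  ∀ a b : A, Δ (a * b) = (a ⊗ₜ[k] (1 : A)) * Δ b ∧ Δ (a * b) = Δ a * ((1 : A) ⊗ₜ[k] b)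

/-- The element `e = (1/n) ∑_{j=1}^{n} g^j ⊗ g^{n-j}` of `k[G] ⊗ k[G]`. -/
noncomputable def cyclicSepElem (k G : Type*) [Field k] [Group G] (g : G) (n : ℕ) :
    MonoidAlgebra k G ⊗[k] MonoidAlgebra k G :=
  ((n : k)⁻¹) • ∑ j ∈ Finset.Icc 1 n,
    (MonoidAlgebra.of k G (g ^ j)) ⊗ₜ[k] (MonoidAlgebra.of k G (g ^ (n - j)))

/-- The `k`-linear map `Δ` on `k[G]` determined by `Δ x = x · e`,
i.e. `Δ x = (x ⊗ 1) * e`. -/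
noncomputable def cyclicCoprod (k G : Type*) [Field k] [Group G] (g : G) (n : ℕ) :
    MonoidAlgebra k G →ₗ[k] MonoidAlgebra k G ⊗[k] MonoidAlgebra k G :=
  LinearMap.mulRight k (cyclicSepElem k G g n) ∘ₗ
    ((TensorProduct.mk k (MonoidAlgebra k G) (MonoidAlgebra k G)).flip 1)

theorem semiconjBy_sum_Icc_pow_mul_pow {R : Type*} [Ring R] {x y : R} (hxy : Commute x y) {n : ℕ}
    (hn : x ^ n = y ^ n) : SemiconjBy (∑ j ∈ Finset.Icc 1 n, x ^ j * y ^ (n - j)) y x := by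
  set S := ∑ i ∈ Finset.range n, x ^ i * y ^ (n - 1 - i) with hS
  have sum_eq : ∑ j ∈ Finset.Icc 1 n, x ^ j * y ^ (n - j) = x * S := by
    rw [← Finset.Ico_add_one_right_eq_Icc, Finset.sum_Ico_eq_sum_range, hS, Finset.mul_sum]
    simp only [Nat.add_sub_cancel, pow_add, pow_one, mul_assoc, Nat.sub_sub]
  have S_mul : S * y = S * x := by
    rw [eq_comm, ← sub_eq_zero, ← mul_sub, hxy.geom_sum₂_mul, hn, sub_self]
  have comm : Commute x S :=
    Commute.sum_right _ _ _ fun i _ =>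
      ((Commute.refl x).pow_right i).mul_right (hxy.pow_right _)
  rw [sum_eq, SemiconjBy, mul_assoc, S_mul, comm.eq]

theorem semiconjBy_map_of_mem_closure {G M : Type*} [Group G] [Monoid M] {φ ψ : G →* M} {e : M}
    {s : Set G} (hs : ∀ g ∈ s, SemiconjBy e (φ g) (ψ g)) {x : G} (hx : x ∈ Subgroup.closure s) :
    SemiconjBy e (φ x) (ψ x) := by
  induction hx using Subgroup.closure_induction with
  | mem g hg => exact hs g hg
  | one => simp only [map_one, SemiconjBy.one_right]
  | mul x y _ _ hx hy => simpa only [map_mul] using hx.mul_right hy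
  | inv x _ hx =>
    have hx' : SemiconjBy e (φ.toHomUnits x : M) (ψ.toHomUnits x : M) := hx
    simpa only [← map_inv, MonoidHom.coe_toHomUnits] using hx'.units_inv_right

section Casimir

variable {R A : Type*} [CommSemiring R] [Semiring A] [Algebra R A]

/-- Casimir elements of `A ⊗ A`: those with `a • e = e • a` for the outer `A`-bimodule structure.
The two actions are encoded as multiplication by `a ⊗ 1` on the left and by `1 ⊗ a` on the right, in
the algebra `A ⊗ A`. -/
def IsCasimir (e : A ⊗[R] A) : Prop :=
  ∀ a : A, SemiconjBy e (1 ⊗ₜ[R] a) (a ⊗ₜ[R] 1)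

/-- The linear map `a ↦ (a ⊗ 1) * e`, the candidate coproduct on `A` attached to `e : A ⊗ A`. -/
noncomputable def elemCoprod (e : A ⊗[R] A) : A →ₗ[R] A ⊗[R] A :=
  LinearMap.mulRight R e ∘ₗ (TensorProduct.mk R A A).flip 1

theorem elemCoprod_apply (e : A ⊗[R] A) (a : A) : elemCoprod e a = (a ⊗ₜ[R] 1) * e := rfl

theorem elemCoprod_mul (e : A ⊗[R] A) (a b : A) :
    elemCoprod e (a * b) = (a ⊗ₜ[R] 1) * elemCoprod e b := by
  rw [elemCoprod_apply, elemCoprod_apply, ← mul_assoc, Algebra.TensorProduct.tmul_mul_tmul, one_mul]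

theorem elemCoprod_one (e : A ⊗[R] A) : elemCoprod e 1 = e := by
  rw [elemCoprod_apply, ← Algebra.TensorProduct.one_def, one_mul]

theorem mul'_tmul_one_mul (a : A) (t : A ⊗[R] A) :
    LinearMap.mul' R A ((a ⊗ₜ[R] 1) * t) = a * LinearMap.mul' R A t := by
  induction t with
  | zero => simp only [mul_zero, map_zero]
  | tmul b c =>
    simp only [Algebra.TensorProduct.tmul_mul_tmul, LinearMap.mul'_apply, one_mul, mul_assoc]
  | add s t hs ht => simp only [mul_add, map_add, hs, ht]

theorem mul'_comp_elemCoprod_eq_id_iff {e : A ⊗[R] A} :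
    LinearMap.mul' R A ∘ₗ elemCoprod e = LinearMap.id ↔ LinearMap.mul' R A e = 1 := by
  refine ⟨fun h => ?_, fun h => LinearMap.ext fun a => ?_⟩
  · simpa only [LinearMap.comp_apply, elemCoprod_one, LinearMap.id_apply]
      using LinearMap.congr_fun h 1
  · rw [LinearMap.comp_apply, elemCoprod_apply, mul'_tmul_one_mul, h, mul_one, LinearMap.id_apply]

theorem isCasimir_monoidAlgebra_of_closure_eq_top {G : Type*} [Group G]
    {e : MonoidAlgebra R G ⊗[R] MonoidAlgebra R G} {s : Set G} (hs : Subgroup.closure s = ⊤)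
    (he : ∀ g ∈ s, SemiconjBy e (1 ⊗ₜ[R] MonoidAlgebra.of R G g) (MonoidAlgebra.of R G g ⊗ₜ[R] 1)) :
    IsCasimir e := by
  intro a
  induction a using MonoidAlgebra.induction_on with
  | of x =>
    let φ : G →* MonoidAlgebra R G ⊗[R] MonoidAlgebra R G :=
      Algebra.TensorProduct.includeRight.toMonoidHom'.comp (MonoidAlgebra.of R G)
    let ψ : G →* MonoidAlgebra R G ⊗[R] MonoidAlgebra R G :=
      (Algebra.TensorProduct.includeLeft (S := R)).toMonoidHom'.comp (MonoidAlgebra.of R G)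
    exact semiconjBy_map_of_mem_closure (φ := φ) (ψ := ψ) he (hs ▸ Subgroup.mem_top x)
  | add a b ha hb => simpa only [tmul_add, add_tmul] using ha.add_right hb
  | smul r a ha =>
    rw [SemiconjBy, tmul_smul, ← smul_tmul', mul_smul_comm, smul_mul_assoc, ha.eq]

end Casimir

theorem isNearlyFrobenius_elemCoprod_iff {k A : Type*} [Field k] [Ring A] [Algebra k A]
    {e : A ⊗[k] A} : IsNearlyFrobenius k A (elemCoprod e) ↔ IsCasimir e := by
  refine ⟨fun h a => ?_, fun h a b => ⟨elemCoprod_mul e a b, ?_⟩⟩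
  · have h_left := (h a 1).1
    have h_right := (h 1 a).2
    rw [mul_one, elemCoprod_one] at h_left
    rw [one_mul, elemCoprod_one] at h_right
    exact h_right.symm.trans h_left
  · rw [elemCoprod_mul, elemCoprod_apply, elemCoprod_apply, mul_assoc, (h b).eq]

section Cyclic

variable {k G : Type*} [Field k] [Group G] {g : G} {n : ℕ}

theorem cyclicCoprod_eq_elemCoprod (g : G) (n : ℕ) :
    cyclicCoprod k G g n = elemCoprod (cyclicSepElem k G g n) := rfl

theorem cyclicSepElem_eq_smul_sum_pow_mul_pow (g : G) (n : ℕ) :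
    cyclicSepElem k G g n = (n : k)⁻¹ • ∑ j ∈ Finset.Icc 1 n,
      (MonoidAlgebra.of k G g ⊗ₜ[k] 1) ^ j * (1 ⊗ₜ[k] MonoidAlgebra.of k G g) ^ (n - j) := by
  simp only [cyclicSepElem, Algebra.TensorProduct.tmul_pow, Algebra.TensorProduct.tmul_mul_tmul,
    one_pow, one_mul, mul_one, map_pow]

theorem semiconjBy_cyclicSepElem (hgn : g ^ n = 1) :
    SemiconjBy (cyclicSepElem k G g n)
      (1 ⊗ₜ[k] MonoidAlgebra.of k G g) (MonoidAlgebra.of k G g ⊗ₜ[k] 1) := by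
  set x := MonoidAlgebra.of k G g ⊗ₜ[k] (1 : MonoidAlgebra k G) with hx
  set y := (1 : MonoidAlgebra k G) ⊗ₜ[k] MonoidAlgebra.of k G g with hy
  have hxy : Commute x y := by
    simp only [hx, hy, Commute, SemiconjBy, Algebra.TensorProduct.tmul_mul_tmul, one_mul, mul_one]
  have hpow : x ^ n = y ^ n := by
    simp only [hx, hy, Algebra.TensorProduct.tmul_pow, ← map_pow, hgn, map_one, one_pow]
  rw [cyclicSepElem_eq_smul_sum_pow_mul_pow, SemiconjBy, smul_mul_assoc, mul_smul_comm,
    (semiconjBy_sum_Icc_pow_mul_pow hxy hpow).eq]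

theorem isCasimir_cyclicSepElem (hg : ∀ x : G, x ∈ Subgroup.zpowers g) (hgn : g ^ n = 1) :
    IsCasimir (cyclicSepElem k G g n) := by
  have hclosure : Subgroup.closure {g} = ⊤ := by
    rw [← Subgroup.zpowers_eq_closure, Subgroup.eq_top_iff']
    exact hg
  refine isCasimir_monoidAlgebra_of_closure_eq_top hclosure ?_
  rintro _ rfl
  exact semiconjBy_cyclicSepElem hgn

theorem mul'_cyclicSepElem (hgn : g ^ n = 1) (hnk : (n : k) ≠ 0) :
    LinearMap.mul' k (MonoidAlgebra k G) (cyclicSepElem k G g n) = 1 := by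
  have mul'_term : ∀ j ∈ Finset.Icc 1 n, LinearMap.mul' k (MonoidAlgebra k G)
      (MonoidAlgebra.of k G (g ^ j) ⊗ₜ[k] MonoidAlgebra.of k G (g ^ (n - j))) = 1 := by
    intro j hj
    rw [LinearMap.mul'_apply, ← map_mul, pow_mul_pow_sub g (Finset.mem_Icc.mp hj).2, hgn, map_one]
  rw [cyclicSepElem, map_smul, map_sum, Finset.sum_congr rfl mul'_term, Finset.sum_const,
    Nat.card_Icc, Nat.add_sub_cancel, ← Nat.cast_smul_eq_nsmul k, inv_smul_smul₀ hnk]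

theorem cyclicCoprod_isNearlyFrobenius_and_normalized_general
    (hg : ∀ x : G, x ∈ Subgroup.zpowers g) (hgn : g ^ n = 1) (hnk : (n : k) ≠ 0) :
    IsNearlyFrobenius k (MonoidAlgebra k G) (cyclicCoprod k G g n) ∧
      LinearMap.mul' k (MonoidAlgebra k G) ∘ₗ cyclicCoprod k G g n = LinearMap.id := by
  rw [cyclicCoprod_eq_elemCoprod]
  exact ⟨isNearlyFrobenius_elemCoprod_iff.mpr (isCasimir_cyclicSepElem hg hgn),
    mul'_comp_elemCoprod_eq_id_iff.mpr (mul'_cyclicSepElem hgn hnk)⟩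

end Cyclic

/-- for a finite cyclic group `G` of order `n` with generator `g`
and a field `k` in which `n` is invertible, the map `Δ(x) = x · e` with
`e = (1/n) ∑_{j=1}^{n} gʲ ⊗ gⁿ⁻ʲ` is a normalized nearly Frobenius coproduct
on the group algebra `k[G]`. -/
theorem cyclicCoprod_isNearlyFrobenius_and_normalized (k G : Type*) [Field k]
    [Group G] [Fintype G] (g : G) (hg : ∀ x : G, x ∈ Subgroup.zpowers g)
    (n : ℕ) (hn : Fintype.card G = n) (hnk : (n : k) ≠ 0) :
    IsNearlyFrobenius k (MonoidAlgebra k G) (cyclicCoprod k G g n) ∧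
      LinearMap.mul' k (MonoidAlgebra k G) ∘ₗ cyclicCoprod k G g n = LinearMap.id := by
  exact cyclicCoprod_isNearlyFrobenius_and_normalized_general hg (hn ▸ pow_card_eq_one) hnk
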